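/- arXiv:2305.04428 — 6 statements merged into one kernel-verified Lean document; each statement's English description precedes it below -/
import Mathlib

section
/- Hybrid correlation transform, block positivity: let m, n ∈ ℕ, r > 0, and let (a_ν), (b_ν), (c_ν) be real sequences with |c_ν| ≤ √(|a_ν| · |b_ν|) for all ν ∈ ℕ, ∑_ν |a_ν| r^ν < ∞ and ∑_ν |b_ν| r^ν < ∞. Let M be a real positive semidefinite (m+n)×(m+n) matrix written in block form M = [[A, S],[Sᵀ, B]] with A of size m×m, B of size n×n, S of size m×n, and suppose every entry of M lies in [-r, r]. Then the block matrix [[F[A], Q[S]],[Q[S]ᵀ, G[B]]] is positive semidefinite, where F[A], Q[S], G[B] denote the entrywise applications of F(x) := ∑_ν |a_ν| x^ν, Q(x) := ∑_ν c_ν x^ν and G(x) := ∑_ν |b_ν| x^ν (all series converge absolutely on [-r, r]). -/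
open scoped BigOperators
open Matrix


lemma aux_two (p q c : ℝ) (hp : 0 ≤ p) (hq : 0 ≤ q) (h : |c| ≤ Real.sqrt (p * q)) :
    (Matrix.of ![![p, c], ![c, q]] : Matrix (Fin 2) (Fin 2) ℝ).PosSemidef := by
  have h2 : c ^ 2 ≤ p * q := by
    have := Real.sq_sqrt (mul_nonneg hp hq)
    rw [← sq_abs, ← this]
    gcongr
  apply Matrix.PosSemidef.of_dotProduct_mulVec_nonneg
  · ext i j
    fin_cases i <;> fin_cases j <;> simp
  · intro x
    simp [Matrix.mulVec, dotProduct, Fin.sum_univ_two]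
    rcases hp.eq_or_lt with rfl | hp
    · have : c = 0 := by nlinarith [sq_nonneg c]
      subst this
      nlinarith [mul_nonneg hq (sq_nonneg (x 1))]
    · have h3 : 0 ≤ p * (x 0 * (p * x 0 + c * x 1) + x 1 * (c * x 0 + q * x 1)) := by
        nlinarith [sq_nonneg (p * x 0 + c * x 1), mul_nonneg (sub_nonneg.2 h2) (sq_nonneg (x 1))]
      exact nonneg_of_mul_nonneg_right h3 hp

lemma aux_pow {ι : Type*} [Fintype ι] (M : Matrix ι ι ℝ) (hM : M.PosSemidef) (k : ℕ) :
    (Matrix.of fun i j => M i j ^ k).PosSemidef := by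
  induction k with
  | zero =>
    have h := Matrix.posSemidef_vecMulVec_self_star (fun _ : ι => (1 : ℝ))
    convert h using 1
    ext i j
    simp [Matrix.vecMulVec]
  | succ k ih =>
    have h : ((Matrix.of fun i j => M i j ^ k).hadamard M).PosSemidef := ih.hadamard hM
    have e : (Matrix.of fun i j => M i j ^ (k + 1)) =
        (Matrix.of fun i j => M i j ^ k).hadamard M := by
      ext i j
      simp [pow_succ]
    rw [e]
    exact h

lemma aux_hasSum {ι : Type*} [Fintype ι] (T : ℕ → Matrix ι ι ℝ) (P : Matrix ι ι ℝ)
    (hT : ∀ k, (T k).PosSemidef) (h : ∀ i j, HasSum (fun k => T k i j) (P i j)) :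
    P.PosSemidef := by
  apply Matrix.PosSemidef.of_dotProduct_mulVec_nonneg
  · ext i j
    have h1 := h j i
    have : (fun k => T k j i) = fun k => T k i j := by
      funext k
      simpa using (hT k).isHermitian.apply i j
    rw [this] at h1
    simpa using h1.unique (h i j)
  · intro x
    have : HasSum (fun k => star x ⬝ᵥ (T k *ᵥ x)) (star x ⬝ᵥ (P *ᵥ x)) := by
      simp only [Matrix.mulVec, dotProduct]
      exact hasSum_sum fun i _ => (hasSum_sum fun j _ => (h i j).mul_right _).mul_left _
    exact this.nonneg fun k => (hT k).dotProduct_mulVec_nonneg x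

lemma aux_summable (r : ℝ) (d : ℕ → ℝ) (hd : Summable fun k => |d k| * r ^ k) (x : ℝ)
    (hx : x ∈ Set.Icc (-r) r) : Summable fun k => d k * x ^ k := by
  refine Summable.of_norm_bounded hd fun k => ?_
  rw [Real.norm_eq_abs, abs_mul, abs_pow]
  have := abs_le.2 hx
  gcongr

/-- Hybrid correlation transform, block positivity: if `|c ν| ≤ √(|a ν| |b ν|)` and
`∑ |a ν| rᵛ, ∑ |b ν| rᵛ < ∞`, then the entrywise application of
`F(x) = ∑ |a ν| xᵛ`, `Q(x) = ∑ c ν xᵛ`, `G(x) = ∑ |b ν| xᵛ` to the blocks of a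
positive semidefinite block matrix `[[A, S], [Sᵀ, B]]` with entries in `[-r, r]`
yields a positive semidefinite block matrix `[[F[A], Q[S]], [Q[S]ᵀ, G[B]]]`. -/
theorem hybrid_block_posSemidef (m n : ℕ) (r : ℝ) (hr : 0 < r)
    (a b c : ℕ → ℝ)
    (hc : ∀ ν, |c ν| ≤ Real.sqrt (|a ν| * |b ν|))
    (ha : Summable fun ν => |a ν| * r ^ ν)
    (hb : Summable fun ν => |b ν| * r ^ ν)
    (A : Matrix (Fin m) (Fin m) ℝ) (B : Matrix (Fin n) (Fin n) ℝ)
    (S : Matrix (Fin m) (Fin n) ℝ)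
    (hM : (Matrix.fromBlocks A S Sᵀ B).PosSemidef)
    (hEntries : ∀ i j, Matrix.fromBlocks A S Sᵀ B i j ∈ Set.Icc (-r) r) :
    (Matrix.fromBlocks
      (Matrix.of fun i j => ∑' ν : ℕ, |a ν| * A i j ^ ν)
      (Matrix.of fun i j => ∑' ν : ℕ, c ν * S i j ^ ν)
      (Matrix.of fun i j => ∑' ν : ℕ, c ν * S i j ^ ν)ᵀ
      (Matrix.of fun i j => ∑' ν : ℕ, |b ν| * B i j ^ ν)).PosSemidef := by
  have hcs : Summable fun ν => |c ν| * r ^ ν := by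
    refine Summable.of_nonneg_of_le (fun ν => by positivity) (fun ν => ?_) (ha.add hb)
    rw [← add_mul]
    gcongr
    refine (hc ν).trans (Real.sqrt_le_iff.2 ⟨by positivity, ?_⟩)
    nlinarith [abs_nonneg (a ν), abs_nonneg (b ν), mul_nonneg (abs_nonneg (a ν)) (abs_nonneg (b ν))]
  let e : Fin m ⊕ Fin n → Fin 2 := Sum.elim (fun _ => 0) (fun _ => 1)
  refine aux_hasSum (fun ν => ((Matrix.of ![![|a ν|, c ν], ![c ν, |b ν|]] :
      Matrix (Fin 2) (Fin 2) ℝ).submatrix e e).hadamard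
      (Matrix.of fun i j => (Matrix.fromBlocks A S Sᵀ B) i j ^ ν)) _ (fun ν => ?_) ?_
  · exact ((aux_two _ _ _ (abs_nonneg _) (abs_nonneg _) (hc ν)).submatrix e).hadamard
      (aux_pow _ hM ν)
  · rintro (i | i) (j | j)
    · simpa [e] using (aux_summable r (fun ν => |a ν|) (by simpa using ha) _
        (hEntries (.inl i) (.inl j))).hasSum
    · simpa [e] using (aux_summable r c hcs _ (hEntries (.inl i) (.inr j))).hasSum
    · simpa [e] using (aux_summable r c hcs _ (hEntries (.inr i) (.inl j))).hasSum
    · simpa [e] using (aux_summable r (fun ν => |b ν|) (by simpa using hb) _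
        (hEntries (.inr i) (.inr j))).hasSum
end

section
/- A complex positive semidefinite matrix all of whose entries have modulus 1 has rank one with unimodular factor: if n ∈ ℕ and A is a complex n×n positive semidefinite matrix with |A i j| = 1 for all i, j, then there exists x ∈ ℂⁿ with |x i| = 1 for all i and A i j = x i · conj(x j) for all i, j (i.e. A = x x*). -/
open scoped BigOperators ComplexOrder

/-- A complex positive semidefinite matrix all of whose entries have modulus 1 is of
the form `x x*` for a vector `x` with unimodular entries. -/
theorem posSemidef_unimodular_entries_rank_one (n : ℕ)
    (A : Matrix (Fin n) (Fin n) ℂ) (hA : A.PosSemidef)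
    (h1 : ∀ i j, ‖A i j‖ = 1) :
    ∃ x : Fin n → ℂ, (∀ i, ‖x i‖ = 1) ∧
      ∀ i j, A i j = x i * (starRingEnd ℂ) (x j) := by
  rcases n with _ | n
  · exact ⟨fun i => i.elim0, fun i => i.elim0, fun i => i.elim0⟩
  refine ⟨fun i => A i 0, fun i => h1 i 0, fun i j => ?_⟩
  have hd : ∀ i, A i i = 1 := fun i => by
    have h := Complex.norm_of_nonneg' (hA.diag_nonneg (i := i))
    rw [h1] at h
    simpa using h.symm
  have hs : ∀ i j, (starRingEnd ℂ) (A i j) = A j i := fun i j => hA.isHermitian.apply j i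
  have hm : A j 0 * A 0 j = 1 := by
    rw [← hs j 0, Complex.mul_conj, Complex.normSq_eq_norm_sq, h1]; simp
  have hv : ∀ k, A.mulVec (Pi.single 0 (A 0 j) - Pi.single j 1) k = A k 0 * A 0 j - A k j := by
    intro k
    simp [Matrix.mulVec_sub, Matrix.mulVec_single, mul_comm]
  have hz := (hA.dotProduct_mulVec_zero_iff (Pi.single 0 (A 0 j) - Pi.single j 1)).1 (by
    have e : A.mulVec (Pi.single 0 (A 0 j) - Pi.single j 1)
        = fun k => A k 0 * A 0 j - A k j := funext hv
    rw [e, star_sub, sub_dotProduct, ← Pi.single_star, ← Pi.single_star]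
    simp [single_dotProduct, hd, hm])
  have := congrFun hz i
  rw [hv] at this
  rw [hs]
  exact (sub_eq_zero.1 this).symm
end

section
/- Block-completion characterisation of quantum correlation matrices, and absolute convexity: for a complex m×n matrix S the following are equivalent: (a) S ∈ Q_{m,n}; (b) there exist an m×m correlation matrix A and an n×n correlation matrix B such that the (m+n)×(m+n) block matrix [[A, S],[Sᴴ, B]] is a correlation matrix. Moreover Q_{m,n} is absolutely convex: if S₁, S₂ ∈ Q_{m,n} and λ, μ ∈ ℂ with |λ| + |μ| ≤ 1, then λ·S₁ + μ·S₂ ∈ Q_{m,n}. -/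
open scoped BigOperators ComplexOrder
open Matrix

/-- `S` is a quantum correlation matrix: `S i j = (u i)* (v j)` for families of unit
vectors `u`, `v` in some finite-dimensional complex Hilbert space `ℂ^d`. -/
def QuantumCorrelation {ι κ : Type*} (S : Matrix ι κ ℂ) : Prop :=
  ∃ (d : ℕ) (u : ι → EuclideanSpace ℂ (Fin d)) (v : κ → EuclideanSpace ℂ (Fin d)),
    (∀ i, ‖u i‖ = 1) ∧ (∀ j, ‖v j‖ = 1) ∧ ∀ i j, S i j = (inner ℂ (u i) (v j) : ℂ)

lemma QuantumCorrelation.of_fintype {ι κ τ : Type*} [Fintype τ] {S : Matrix ι κ ℂ}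
    (U : ι → τ → ℂ) (V : κ → τ → ℂ)
    (hU : ∀ i, ∑ t, star (U i t) * U i t = 1) (hV : ∀ j, ∑ t, star (V j t) * V j t = 1)
    (hS : ∀ i j, S i j = ∑ t, star (U i t) * V j t) : QuantumCorrelation S := by
  have key : ∀ f : τ → ℂ, (∑ t, star (f t) * f t = 1) →
      ‖(WithLp.toLp 2 (f ∘ (Fintype.equivFin τ).symm) :
        EuclideanSpace ℂ (Fin (Fintype.card τ)))‖ = 1 := by
    intro f hf
    rw [EuclideanSpace.norm_eq, Real.sqrt_eq_one]
    simp only [Function.comp]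
    rw [Equiv.sum_comp (Fintype.equivFin τ).symm (fun t => ‖f t‖ ^ 2)]
    have : ((∑ t, ‖f t‖ ^ 2 : ℝ) : ℂ) = 1 := by
      rw [← hf]
      push_cast
      exact Finset.sum_congr rfl fun t _ => (Complex.conj_mul' (f t)).symm
    exact_mod_cast this
  refine ⟨Fintype.card τ, fun i => WithLp.toLp 2 (U i ∘ (Fintype.equivFin τ).symm),
    fun j => WithLp.toLp 2 (V j ∘ (Fintype.equivFin τ).symm), fun i => key _ (hU i),
    fun j => key _ (hV j), fun i j => ?_⟩
  rw [hS, PiLp.inner_apply,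
    ← Equiv.sum_comp (Fintype.equivFin τ).symm (fun t => star (U i t) * V j t)]
  refine Finset.sum_congr rfl fun t _ => ?_
  simp [mul_comm]

lemma QuantumCorrelation.sums {ι κ : Type*} {S : Matrix ι κ ℂ} (h : QuantumCorrelation S) :
    ∃ (d : ℕ) (U : ι → Fin d → ℂ) (V : κ → Fin d → ℂ),
    (∀ i, ∑ t, star (U i t) * U i t = 1) ∧ (∀ j, ∑ t, star (V j t) * V j t = 1) ∧
    (∀ i j, S i j = ∑ t, star (U i t) * V j t) := by
  obtain ⟨d, u, v, hu, hv, hS⟩ := h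
  have key : ∀ x y : EuclideanSpace ℂ (Fin d),
      (inner ℂ x y : ℂ) = ∑ t, star (x t) * y t := by
    intro x y
    rw [PiLp.inner_apply]
    refine Finset.sum_congr rfl fun t _ => ?_
    simp [mul_comm]
  refine ⟨d, fun i => u i, fun j => v j, fun i => ?_, fun j => ?_, fun i j => ?_⟩
  · rw [← key, inner_self_eq_norm_sq_to_K, hu]; simp
  · rw [← key, inner_self_eq_norm_sq_to_K, hv]; simp
  · rw [← key, hS]

open scoped MatrixOrder Matrix.Norms.L2Operator in
lemma exists_gram_factor {ι : Type*} [Fintype ι] [DecidableEq ι] {M : Matrix ι ι ℂ}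
    (hM : M.PosSemidef) : ∃ C : Matrix ι ι ℂ, M = Cᴴ * C :=
  CStarAlgebra.nonneg_iff_eq_star_mul_self.mp hM.nonneg

lemma exists_phase (z : ℂ) : ∃ (a : ℝ) (w : ℂ), (a : ℂ) * a = (‖z‖ : ℂ) ∧ star w * w = 1 ∧
    (a : ℂ) * a * w = z := by
  have h : ((Real.sqrt ‖z‖ : ℝ) : ℂ) * (Real.sqrt ‖z‖ : ℝ) = (‖z‖ : ℂ) := by
    rw [← Complex.ofReal_mul, Real.mul_self_sqrt (norm_nonneg z)]
  refine ⟨Real.sqrt ‖z‖, Complex.exp (z.arg * Complex.I), h, ?_, ?_⟩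
  · have := Complex.conj_mul' (Complex.exp (z.arg * Complex.I))
    rw [Complex.norm_exp_ofReal_mul_I] at this
    simpa using this
  · rw [h, Complex.norm_mul_exp_arg_mul_I]

/-- Block-completion characterisation of quantum correlation matrices, and absolute
convexity of `Q_{m,n}`. -/
theorem quantumCorrelation_block_characterisation_and_absolutelyConvex (m n : ℕ) :
    (∀ S : Matrix (Fin m) (Fin n) ℂ,
      QuantumCorrelation S ↔
        ∃ (A : Matrix (Fin m) (Fin m) ℂ) (B : Matrix (Fin n) (Fin n) ℂ),
          (A.PosSemidef ∧ ∀ i, A i i = 1) ∧ (B.PosSemidef ∧ ∀ j, B j j = 1) ∧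
          (Matrix.fromBlocks A S Sᴴ B).PosSemidef ∧
          (∀ i, Matrix.fromBlocks A S Sᴴ B i i = 1)) ∧
    ∀ (S₁ S₂ : Matrix (Fin m) (Fin n) ℂ) (lam mu : ℂ),
      QuantumCorrelation S₁ → QuantumCorrelation S₂ →
      ‖lam‖ + ‖mu‖ ≤ 1 →
      QuantumCorrelation (lam • S₁ + mu • S₂) := by
  constructor
  · intro S
    constructor
    · intro h
      obtain ⟨d, U, V, hU, hV, hS⟩ := h.sums
      let P : Matrix (Fin d) (Fin m) ℂ := fun t i => U i t
      let R : Matrix (Fin d) (Fin n) ℂ := fun t j => V j t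
      have hSP : S = Pᴴ * R := by
        ext i j
        rw [hS]; rfl
      have hA : ∀ i, (Pᴴ * P) i i = 1 := fun i => hU i
      have hB : ∀ j, (Rᴴ * R) j j = 1 := fun j => hV j
      refine ⟨Pᴴ * P, Rᴴ * R, ⟨posSemidef_conjTranspose_mul_self P, hA⟩,
        ⟨posSemidef_conjTranspose_mul_self R, hB⟩, ?_, ?_⟩
      · have := posSemidef_conjTranspose_mul_self (Matrix.fromCols P R)
        rwa [conjTranspose_fromCols_eq_fromRows_conjTranspose, fromRows_mul_fromCols,
          show Rᴴ * P = Sᴴ by rw [hSP]; simp, ← hSP] at this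
      · rintro (i | j)
        · exact hA i
        · exact hB j
    · rintro ⟨A, B, ⟨-, hA⟩, ⟨-, hB⟩, hM, -⟩
      obtain ⟨C, hC⟩ := exists_gram_factor hM
      have e : ∀ x y, fromBlocks A S Sᴴ B x y = ∑ t, star (C t x) * C t y := by
        intro x y
        rw [hC]; rfl
      refine QuantumCorrelation.of_fintype (fun i t => C t (Sum.inl i))
        (fun j t => C t (Sum.inr j)) (fun i => ?_) (fun j => ?_) (fun i j => ?_)
      · rw [← e, fromBlocks_apply₁₁, hA]
      · rw [← e, fromBlocks_apply₂₂, hB]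
      · rw [← e, fromBlocks_apply₁₂]
  · intro S₁ S₂ lam mu h₁ h₂ hle
    obtain ⟨d, U, V, hU, hV, hS⟩ := h₁.sums
    obtain ⟨d', U', V', hU', hV', hS'⟩ := h₂.sums
    obtain ⟨a, w, ha, hw, haw⟩ := exists_phase lam
    obtain ⟨b, z, hb, hz, hbz⟩ := exists_phase mu
    obtain ⟨c, hc⟩ : ∃ c : ℝ, (c : ℂ) * c = 1 - ‖lam‖ - ‖mu‖ := by
      refine ⟨Real.sqrt (1 - ‖lam‖ - ‖mu‖), ?_⟩
      rw [← Complex.ofReal_mul, Real.mul_self_sqrt (by linarith)]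
      push_cast; rfl
    have g : ∀ {k : ℕ} (p q : ℂ) (f f' : Fin k → ℂ),
        ∑ t, star (p * f t) * (q * f' t) = star p * q * ∑ t, star (f t) * f' t := by
      intro k p q f f'
      rw [Finset.mul_sum]
      refine Finset.sum_congr rfl fun t _ => ?_
      rw [star_mul']; ring
    have sr : ∀ r : ℝ, star (r : ℂ) = r := fun r => Complex.conj_ofReal r
    refine QuantumCorrelation.of_fintype (τ := (Fin d ⊕ Fin d') ⊕ Fin 2)
      (fun i => Sum.elim (Sum.elim (fun t => a * U i t) (fun t => b * U' i t)) ![(c : ℂ), 0])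
      (fun j => Sum.elim (Sum.elim (fun t => (a * w) * V j t) (fun t => (b * z) * V' j t))
        ![0, (c : ℂ)]) (fun i => ?_) (fun j => ?_) (fun i j => ?_)
    · simp only [Fintype.sum_sum_type, Sum.elim_inl, Sum.elim_inr, g, hU, hU', Fin.sum_univ_two,
        sr, cons_val_zero, cons_val_one, star_zero]
      linear_combination ha + hb + hc
    · simp only [Fintype.sum_sum_type, Sum.elim_inl, Sum.elim_inr, g, hV, hV', Fin.sum_univ_two,
        sr, cons_val_zero, cons_val_one, star_zero]
      simp only [star_mul', sr]
      linear_combination ha + hb + hc + (a : ℂ) * a * hw + (b : ℂ) * b * hz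
    · simp only [Fintype.sum_sum_type, Sum.elim_inl, Sum.elim_inr, g, Fin.sum_univ_two,
        sr, cons_val_zero, cons_val_one, star_zero, ← hS, ← hS', Matrix.add_apply, Matrix.smul_apply,
        smul_eq_mul]
      linear_combination -S₁ i j * haw - S₂ i j * hbz
end

section
/- Gaussian identities for the standard normal distribution function: (a) for every t ∈ ℝ, ∫_ℝ Φ(x + t) dγ(x) = Φ(t/√2); (b) for every ρ ∈ [-1,1], ∫∫ Φ(x) · Φ(ρ·x + √(1−ρ²)·y) dγ(x) dγ(y) = 1/4 + (1/(2π)) · arcsin(ρ/2) (i.e. h_{Φ,Φ}(ρ) = 1/4 + arcsin(ρ/2)/(2π)). -/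
open MeasureTheory ProbabilityTheory

/-- The standard normal density. -/
noncomputable def stdPhi (x : ℝ) : ℝ :=
  Real.exp (-(x ^ 2) / 2) / Real.sqrt (2 * Real.pi)

/-- The standard normal distribution function. -/
noncomputable def stdCdf (x : ℝ) : ℝ := ∫ t in Set.Iic x, stdPhi t

open scoped MeasureTheory

lemma stdPhi_eq : stdPhi = gaussianPDFReal 0 1 := by
  ext x
  simp only [stdPhi, gaussianPDFReal]
  simp [div_eq_inv_mul]

lemma stdPhi_cont : Continuous stdPhi := by
  unfold stdPhi; fun_prop

lemma stdPhi_integrable : Integrable stdPhi := by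
  rw [stdPhi_eq]; exact integrable_gaussianPDFReal _ _

lemma stdPhi_nonneg (x : ℝ) : 0 ≤ stdPhi x := by
  unfold stdPhi; positivity

lemma stdCdf_eq (x : ℝ) : stdCdf x = ((gaussianReal 0 1) (Set.Iic x)).toReal := by
  rw [gaussianReal_apply_eq_integral _ one_ne_zero, ENNReal.toReal_ofReal, stdCdf, stdPhi_eq]
  exact integral_nonneg (fun _ => gaussianPDFReal_nonneg _ _ _)

lemma stdCdf_nonneg (x : ℝ) : 0 ≤ stdCdf x := by
  rw [stdCdf_eq]; exact ENNReal.toReal_nonneg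

lemma stdCdf_le_one (x : ℝ) : stdCdf x ≤ 1 := by
  rw [stdCdf_eq]; exact ENNReal.toReal_le_of_le_ofReal zero_le_one (by simpa using prob_le_one)

lemma stdCdf_hasDerivAt (x : ℝ) : HasDerivAt stdCdf (stdPhi x) x := by
  have h : stdCdf = fun y => stdCdf 0 + ∫ t in (0:ℝ)..y, stdPhi t := by
    ext y
    rw [← intervalIntegral.integral_Iic_sub_Iic stdPhi_integrable.integrableOn
      stdPhi_integrable.integrableOn]
    simp [stdCdf]
  rw [h]
  exact (intervalIntegral.integral_hasDerivAt_right (stdPhi_cont.intervalIntegrable _ _)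
    stdPhi_cont.aestronglyMeasurable.stronglyMeasurableAtFilter stdPhi_cont.continuousAt).const_add _

lemma stdCdf_cont : Continuous stdCdf :=
  continuous_iff_continuousAt.2 fun x => (stdCdf_hasDerivAt x).continuousAt

lemma stdCdf_zero : stdCdf 0 = 1 / 2 := by
  have h := integral_comp_neg_Iic (0:ℝ) stdPhi
  have h2 : stdCdf 0 = ∫ x in Set.Ioi (0:ℝ), stdPhi x := by
    rw [stdCdf]; simpa [stdPhi] using h
  have h3 : stdPhi = fun x => Real.exp (-(1/2) * x ^ 2) / Real.sqrt (2 * Real.pi) := by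
    ext x; rw [stdPhi]; congr 2; ring
  rw [h2, h3, integral_div, integral_gaussian_Ioi]
  have : Real.pi / (1 / 2) = 2 * Real.pi := by ring
  rw [this]
  have : 0 < Real.sqrt (2 * Real.pi) := by positivity
  field_simp

lemma stdCdf_avg (a b : ℝ) :
    ∫ x, stdCdf (a * x + b) ∂(gaussianReal 0 1) = stdCdf (b / Real.sqrt (1 + a ^ 2)) := by
  have hm : Measurable fun x : ℝ × ℝ => x.1 + x.2 := by fun_prop
  set s := Real.sqrt (1 + a ^ 2) with hs
  have hs0 : 0 < s := by positivity
  have hs2 : s ^ 2 = 1 + a ^ 2 := Real.sq_sqrt (by positivity)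
  have key : ((gaussianReal 0 1).map (-a * ·)) ∗ (gaussianReal 0 1)
      = (gaussianReal 0 1).map (s * ·) := by
    rw [gaussianReal_map_const_mul, gaussianReal_map_const_mul, gaussianReal_conv_gaussianReal]
    congr 1
    · simp
    · ext; simp [hs2, add_comm]
  have e1 : ∫ x, stdCdf (a * x + b) ∂(gaussianReal 0 1)
      = (∫⁻ x, (gaussianReal 0 1) (Set.Iic (a * x + b)) ∂(gaussianReal 0 1)).toReal := by
    simp_rw [stdCdf_eq]
    rw [integral_toReal]
    · apply Measurable.aemeasurable
      have : Monotone fun t : ℝ => (gaussianReal 0 1) (Set.Iic t) :=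
        fun x y h => measure_mono (Set.Iic_subset_Iic.2 h)
      exact this.measurable.comp (by fun_prop)
    · exact ae_of_all _ fun x => measure_lt_top _ _
  have e2 := congrArg (fun m => m (Set.Iic b)) key
  rw [Measure.conv, Measure.map_apply hm measurableSet_Iic,
    Measure.prod_apply (hm measurableSet_Iic), lintegral_map
      (measurable_measure_prodMk_left (hm measurableSet_Iic)) (by fun_prop),
    Measure.map_apply (by fun_prop) measurableSet_Iic] at e2
  rw [e1, stdCdf_eq]
  congr 1
  convert e2 using 1
  · congr 1; ext x; congr 1; ext y
    simp only [Set.mem_Iic, Set.mem_preimage]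
    constructor <;> intro h <;> linarith
  · congr 1; ext y
    simp only [Set.mem_Iic, Set.mem_preimage]
    rw [le_div_iff₀ hs0, mul_comm]

lemma stdPhi_le_one (x : ℝ) : stdPhi x ≤ 1 := by
  unfold stdPhi
  have h1 : Real.exp (-(x ^ 2) / 2) ≤ 1 := Real.exp_le_one_iff.2 (by nlinarith [sq_nonneg x])
  have h2 : 1 ≤ Real.sqrt (2 * Real.pi) := by
    rw [Real.one_le_sqrt]; nlinarith [Real.pi_gt_three]
  exact div_le_one_of_le₀ (h1.trans h2) (by positivity)

lemma G_deriv_value (c : ℝ) :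
    ∫ x, stdCdf x * (stdPhi (c * x) * x) ∂(gaussianReal 0 1) =
      1 / (2 * Real.pi * (1 + c ^ 2) * Real.sqrt (2 + c ^ 2)) := by
  rw [integral_gaussianReal_eq_integral_smul one_ne_zero, ← stdPhi_eq]
  have hpi := Real.pi_pos
  have hq : Real.sqrt (2 * Real.pi) ^ 2 = 2 * Real.pi := Real.sq_sqrt (by positivity)
  have hq0 : 0 < Real.sqrt (2 * Real.pi) := by positivity
  set q := Real.sqrt (2 * Real.pi) with hqdef
  set k := (1 + c ^ 2) / 2 with hk
  have hk0 : 0 < k := by positivity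
  let v : ℝ → ℝ := fun x => -(1 / (2 * k * q ^ 2)) * Real.exp (-k * x ^ 2)
  let v' : ℝ → ℝ := fun x => (1 / q ^ 2) * (x * Real.exp (-k * x ^ 2))
  have hv : ∀ x, HasDerivAt v (v' x) x := by
    intro x
    have := ((((hasDerivAt_id x).pow 2).const_mul (-k)).exp).const_mul (-(1 / (2 * k * q ^ 2)))
    refine HasDerivAt.congr_deriv (f := v) this ?_
    simp only [v', id, Pi.pow_apply]
    field_simp
    simp
  have hvi : Integrable v := (integrable_exp_neg_mul_sq hk0).const_mul _
  have hvi' : Integrable v' := (integrable_mul_exp_neg_mul_sq hk0).const_mul _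
  have hb : ∀ᵐ x : ℝ, ‖stdCdf x‖ ≤ 1 := ae_of_all _ fun x => by
    rw [Real.norm_of_nonneg (stdCdf_nonneg x)]; exact stdCdf_le_one x
  have hb' : ∀ᵐ x : ℝ, ‖stdPhi x‖ ≤ 1 := ae_of_all _ fun x => by
    rw [Real.norm_of_nonneg (stdPhi_nonneg x)]; exact stdPhi_le_one x
  have parts := integral_mul_deriv_eq_deriv_mul_of_integrable
    (u := stdCdf) (u' := stdPhi) (v := v) (v' := v')
    (fun x _ => stdCdf_hasDerivAt x) (fun x _ => hv x)
    (hvi'.bdd_mul stdCdf_cont.aestronglyMeasurable hb)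
    (hvi.bdd_mul stdPhi_cont.aestronglyMeasurable hb')
    (hvi.bdd_mul stdCdf_cont.aestronglyMeasurable hb)
  have e1 : ∀ x, stdPhi x • (stdCdf x * (stdPhi (c * x) * x)) = stdCdf x * v' x := by
    intro x
    simp only [stdPhi, v', smul_eq_mul]
    have : Real.exp (-k * x ^ 2) = Real.exp (-(x ^ 2) / 2) * Real.exp (-((c * x) ^ 2) / 2) := by
      rw [← Real.exp_add]; congr 1; rw [hk]; ring
    rw [this, ← hqdef]
    field_simp
  have e2 : ∀ x, stdPhi x * v x
      = -(1 / (2 * k * q ^ 3)) * Real.exp (-((2 + c ^ 2) / 2) * x ^ 2) := by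
    intro x
    simp only [stdPhi, v]
    have : Real.exp (-((2 + c ^ 2) / 2) * x ^ 2)
        = Real.exp (-(x ^ 2) / 2) * Real.exp (-k * x ^ 2) := by
      rw [← Real.exp_add]; congr 1; rw [hk]; ring
    rw [this, ← hqdef]
    field_simp
  simp_rw [e1]
  rw [parts]
  simp_rw [e2]
  rw [integral_const_mul, integral_gaussian]
  have : Real.pi / ((2 + c ^ 2) / 2) = (2 * Real.pi) / (2 + c ^ 2) := by field_simp
  rw [this, Real.sqrt_div (by positivity), ← hqdef, ← hq, hk]
  field_simp

lemma G_hasDerivAt (c : ℝ) :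
    HasDerivAt (fun c => ∫ x, stdCdf x * stdCdf (c * x) ∂(gaussianReal 0 1))
      (1 / (2 * Real.pi * (1 + c ^ 2) * Real.sqrt (2 + c ^ 2))) c := by
  rw [← G_deriv_value]
  have hc := stdCdf_cont
  have hp := stdPhi_cont
  refine (hasDerivAt_integral_of_dominated_loc_of_deriv_le (s := Set.univ)
    (F := fun c x => stdCdf x * stdCdf (c * x))
    (F' := fun c x => stdCdf x * (stdPhi (c * x) * x)) (bound := fun x => ‖x‖)
    Filter.univ_mem ?_ ?_ ?_ ?_ ?_ ?_).2
  · exact Filter.Eventually.of_forall fun c =>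
      (by fun_prop : Continuous fun x => stdCdf x * stdCdf (c * x)).aestronglyMeasurable
  · refine Integrable.of_bound
      (by fun_prop : Continuous fun x => stdCdf x * stdCdf (c * x)).aestronglyMeasurable 1
      (ae_of_all _ fun x => ?_)
    rw [Real.norm_of_nonneg (mul_nonneg (stdCdf_nonneg _) (stdCdf_nonneg _))]
    exact mul_le_one₀ (stdCdf_le_one _) (stdCdf_nonneg _) (stdCdf_le_one _)
  · exact (by fun_prop :
      Continuous fun x => stdCdf x * (stdPhi (c * x) * x)).aestronglyMeasurable
  · refine ae_of_all _ fun x c _ => ?_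
    rw [← mul_assoc, norm_mul,
      Real.norm_of_nonneg (mul_nonneg (stdCdf_nonneg _) (stdPhi_nonneg _))]
    exact mul_le_of_le_one_left (norm_nonneg _)
      (mul_le_one₀ (stdCdf_le_one _) (stdPhi_nonneg _) (stdPhi_le_one _))
  · have := (memLp_id_gaussianReal (μ := 0) (v := 1) 1)
    exact (memLp_one_iff_integrable (f := id).1 (by simpa using this)).norm
  · refine ae_of_all _ fun x c _ => ?_
    have h := (stdCdf_hasDerivAt (c * x)).comp c ((hasDerivAt_id c).mul_const x)
    simpa using h.const_mul (stdCdf x)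

lemma G_eq (c : ℝ) : ∫ x, stdCdf x * stdCdf (c * x) ∂(gaussianReal 0 1)
    = 1 / 4 + Real.arctan (c / Real.sqrt (2 + c ^ 2)) / (2 * Real.pi) := by
  let H : ℝ → ℝ := fun c => (∫ x, stdCdf x * stdCdf (c * x) ∂(gaussianReal 0 1))
    - Real.arctan (c / Real.sqrt (2 + c ^ 2)) / (2 * Real.pi)
  have hH : ∀ c, HasDerivAt H 0 c := by
    intro c
    have hpi := Real.pi_pos
    have hs0 : 0 < Real.sqrt (2 + c ^ 2) := by positivity
    have hs2 : Real.sqrt (2 + c ^ 2) ^ 2 = 2 + c ^ 2 := Real.sq_sqrt (by positivity)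
    have h1 : HasDerivAt (fun c : ℝ => 2 + c ^ 2) (2 * c) c := by
      simpa using ((hasDerivAt_id c).pow 2).const_add 2
    have h2 := h1.sqrt (by positivity)
    have h3 := (((hasDerivAt_id c).div h2 hs0.ne').arctan).div_const (2 * Real.pi)
    have h4 := (G_hasDerivAt c).sub h3
    refine HasDerivAt.congr_deriv (f := H) h4 ?_
    simp only [id, Pi.div_apply]
    generalize Real.sqrt (2 + c ^ 2) = s at *
    have hc : c ^ 2 = s ^ 2 - 2 := by linarith
    have hs1 : 0 < s ^ 2 - 1 := by nlinarith [sq_nonneg c]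
    have e1 : 1 + (c / s) ^ 2 = 2 * (s ^ 2 - 1) / s ^ 2 := by
      rw [div_pow, hc]; field_simp; ring
    have e2 : (1 * s - c * (2 * c / (2 * s))) / s ^ 2 = 2 / s ^ 3 := by
      have : c * (2 * c / (2 * s)) = c ^ 2 / s := by field_simp
      rw [this, hc]; field_simp; ring
    have e3 : 1 + c ^ 2 = s ^ 2 - 1 := by rw [hc]; ring
    rw [e1, e2, e3]
    field_simp
    ring
  have hconst := is_const_of_deriv_eq_zero (fun c => (hH c).differentiableAt)
    (fun c => (hH c).deriv) c 0
  have h0 : H 0 = 1 / 4 := by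
    have h := stdCdf_avg 1 0
    simp only [one_mul, add_zero, zero_div, stdCdf_zero] at h
    simp only [H, zero_mul, stdCdf_zero, integral_mul_const, h, zero_div, Real.arctan_zero]
    norm_num
  rw [h0] at hconst
  simp only [H] at hconst
  linarith

/-- Gaussian identities for the standard normal distribution function `Φ`:
(a) `∫ Φ(x + t) dγ(x) = Φ(t/√2)`;
(b) `h_{Φ,Φ}(ρ) = 1/4 + arcsin(ρ/2)/(2π)` for `ρ ∈ [-1,1]`. -/
theorem gaussian_cdf_identities :
    (∀ t : ℝ, ∫ x, stdCdf (x + t) ∂(gaussianReal 0 1) = stdCdf (t / Real.sqrt 2)) ∧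
    (∀ ρ ∈ Set.Icc (-1 : ℝ) 1,
      ∫ x, ∫ y, stdCdf x * stdCdf (ρ * x + Real.sqrt (1 - ρ ^ 2) * y)
          ∂(gaussianReal 0 1) ∂(gaussianReal 0 1) =
        1 / 4 + Real.arcsin (ρ / 2) / (2 * Real.pi)) := by
  refine ⟨fun t => ?_, fun ρ hρ => ?_⟩
  · have h := stdCdf_avg 1 t
    simp only [one_mul] at h
    rw [h]; norm_num
  · have hr : ρ ^ 2 ≤ 1 := by nlinarith [hρ.1, hρ.2]
    have hs2 : Real.sqrt (1 - ρ ^ 2) ^ 2 = 1 - ρ ^ 2 := Real.sq_sqrt (by linarith)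
    have inner : ∀ x, ∫ y, stdCdf x * stdCdf (ρ * x + Real.sqrt (1 - ρ ^ 2) * y)
        ∂(gaussianReal 0 1) = stdCdf x * stdCdf (ρ / Real.sqrt (2 - ρ ^ 2) * x) := by
      intro x
      rw [integral_const_mul]
      simp_rw [add_comm (ρ * x)]
      rw [stdCdf_avg, hs2]
      congr 2
      rw [show 1 + (1 - ρ ^ 2) = 2 - ρ ^ 2 by ring]
      ring
    simp_rw [inner]
    rw [G_eq, Real.arcsin_eq_arctan ⟨by linarith [hρ.1], by linarith [hρ.2]⟩]
    congr 3
    have hp : 0 < 2 - ρ ^ 2 := by linarith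
    have hp4 : 0 < 4 - ρ ^ 2 := by linarith
    have e1 : 2 + (ρ / Real.sqrt (2 - ρ ^ 2)) ^ 2 = (4 - ρ ^ 2) / (2 - ρ ^ 2) := by
      rw [div_pow, Real.sq_sqrt hp.le]; field_simp; ring
    have e2 : 1 - (ρ / 2) ^ 2 = (4 - ρ ^ 2) / 2 ^ 2 := by ring
    rw [e1, e2, Real.sqrt_div hp4.le, Real.sqrt_div hp4.le, Real.sqrt_sq (by norm_num)]
    have : 0 < Real.sqrt (2 - ρ ^ 2) := Real.sqrt_pos.2 hp
    have : 0 < Real.sqrt (4 - ρ ^ 2) := Real.sqrt_pos.2 hp4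
    field_simp
end

section
/- Power version of Stein's Lemma: let m ∈ ℕ and let f : ℝ → ℝ be m-times continuously differentiable such that every iterated derivative f^{(l)}, 0 ≤ l ≤ m, is square-integrable with respect to γ. Then ∫_ℝ f(x) · x^m dγ(x) = ∑_{ν=0}^{⌊m/2⌋} binom(m, 2ν) · (2ν − 1)!! · ∫_ℝ f^{(m−2ν)}(x) dγ(x), where (2ν−1)!! denotes the double factorial with (−1)!! = 1. -/
open MeasureTheory ProbabilityTheory

lemma aux_integrable_iff (h : ℝ → ℝ) : Integrable h (gaussianReal 0 1) ↔
    Integrable (fun x => gaussianPDFReal 0 1 x * h x) := by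
  rw [gaussianReal_of_var_ne_zero 0 one_ne_zero,
    integrable_withDensity_iff_integrable_smul' (measurable_gaussianPDF 0 1)
      (Filter.Eventually.of_forall fun x => gaussianPDF_lt_top)]
  simp only [toReal_gaussianPDF, smul_eq_mul]

lemma aux_deriv_pdf (x : ℝ) :
    HasDerivAt (gaussianPDFReal 0 1) (-x * gaussianPDFReal 0 1 x) x := by
  have h1 : HasDerivAt (fun y : ℝ => -(y - 0) ^ 2 / (2 * ((1 : NNReal) : ℝ))) (-x) x := by
    have := (((hasDerivAt_id x).sub_const 0).pow 2).neg.div_const (2 * ((1 : NNReal) : ℝ))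
    convert! this using 1
    simp; ring
  have h2 := (h1.exp).const_mul (√(2 * Real.pi * ((1 : NNReal) : ℝ)))⁻¹
  have h3 : gaussianPDFReal 0 1 = fun y : ℝ => (√(2 * Real.pi * ((1 : NNReal) : ℝ)))⁻¹ *
      Real.exp (-(y - 0) ^ 2 / (2 * ((1 : NNReal) : ℝ))) := by
    funext y; simp [gaussianPDFReal]
  rw [h3]
  convert! h2 using 1
  ring

lemma aux_stein (h h' : ℝ → ℝ) (hd : ∀ x, HasDerivAt h (h' x) x)
    (i0 : Integrable h (gaussianReal 0 1)) (i1 : Integrable h' (gaussianReal 0 1))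
    (i2 : Integrable (fun x => h x * x) (gaussianReal 0 1)) :
    ∫ x, h x * x ∂(gaussianReal 0 1) = ∫ x, h' x ∂(gaussianReal 0 1) := by
  have key := integral_eq_zero_of_hasDerivAt_of_integrable
    (f := fun x => gaussianPDFReal 0 1 x * h x)
    (f' := fun x => gaussianPDFReal 0 1 x * (h' x - h x * x))
    (fun x => by
      convert! (aux_deriv_pdf x).mul (hd x) using 1
      ring)
    ((aux_integrable_iff _).1 (i1.sub i2)) ((aux_integrable_iff _).1 i0)
  have : ∫ x, (h' x - h x * x) ∂(gaussianReal 0 1) = 0 := by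
    rw [integral_gaussianReal_eq_integral_smul one_ne_zero]
    simpa only [smul_eq_mul] using key
  rw [integral_sub i1 i2] at this
  linarith

lemma aux_int (f : ℝ → ℝ) (hf : MemLp f 2 (gaussianReal 0 1)) (k : ℕ) :
    Integrable (fun x => f x * x ^ k) (gaussianReal 0 1) := by
  have h : MemLp (fun x : ℝ => x ^ k) 2 (gaussianReal 0 1) := by
    rw [memLp_two_iff_integrable_sq (by fun_prop)]
    have := (memLp_id_gaussianReal (μ := 0) (v := 1) ((2 * k : ℕ) : NNReal)).integrable_norm_pow'
    refine this.congr (Filter.Eventually.of_forall fun x => ?_)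
    simp [pow_mul, pow_right_comm]
  exact hf.integrable_mul h

lemma aux_step (f : ℝ → ℝ) (hd : Differentiable ℝ f)
    (h0 : MemLp f 2 (gaussianReal 0 1)) (h1 : MemLp (deriv f) 2 (gaussianReal 0 1)) (k : ℕ) :
    ∫ x, f x * x ^ (k + 1) ∂(gaussianReal 0 1) =
      ∫ x, deriv f x * x ^ k ∂(gaussianReal 0 1) +
        k * ∫ x, f x * x ^ (k - 1) ∂(gaussianReal 0 1) := by
  have := aux_stein (fun x => f x * x ^ k)
    (fun x => deriv f x * x ^ k + k * (f x * x ^ (k - 1)))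
    (fun x => by
      convert! (hd x).hasDerivAt.mul (hasDerivAt_pow k x) using 1
      ring)
    (aux_int f h0 k) ((aux_int _ h1 k).add ((aux_int f h0 (k - 1)).const_mul _))
    (by simpa only [mul_assoc, ← pow_succ] using aux_int f h0 (k + 1))
  rw [integral_add (aux_int _ h1 k) ((aux_int f h0 (k - 1)).const_mul _),
    integral_const_mul] at this
  rw [← this]
  simp only [mul_assoc, ← pow_succ]

lemma aux_coef (m ν : ℕ) :
    ((m + 2).choose (2 * (ν + 1)) : ℝ) * (Nat.doubleFactorial (2 * (ν + 1) - 1) : ℝ) =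
      ((m + 1).choose (2 * (ν + 1)) : ℝ) * (Nat.doubleFactorial (2 * (ν + 1) - 1) : ℝ) +
      (m + 1) * ((m.choose (2 * ν) : ℝ) * (Nat.doubleFactorial (2 * ν - 1) : ℝ)) := by
  have e : (Nat.doubleFactorial (2 * (ν + 1) - 1)) =
      (2 * ν + 1) * Nat.doubleFactorial (2 * ν - 1) := by
    cases ν with
    | zero => simp
    | succ n => exact Nat.doubleFactorial_add_two (2 * n + 1)
  have c1 : (m + 2).choose (2 * (ν + 1)) =
      (m + 1).choose (2 * ν + 1) + (m + 1).choose (2 * (ν + 1)) :=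
    Nat.choose_succ_succ (m + 1) (2 * ν + 1)
  have c2 := Nat.add_one_mul_choose_eq m (2 * ν)
  rw [e, c1]
  have c3 : ((m : ℝ) + 1) * (m.choose (2 * ν)) = ((m + 1).choose (2 * ν + 1)) * (2 * ν + 1) := by
    exact_mod_cast c2
  push_cast
  linear_combination (-(Nat.doubleFactorial (2 * ν - 1) : ℝ)) * c3

lemma aux_sum (m : ℕ) (a : ℕ → ℝ) :
    ∑ ν ∈ Finset.range ((m + 2) / 2 + 1),
        ((m + 2).choose (2 * ν) : ℝ) * (Nat.doubleFactorial (2 * ν - 1) : ℝ) * a (m + 2 - 2 * ν) =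
    ∑ ν ∈ Finset.range ((m + 1) / 2 + 1),
        ((m + 1).choose (2 * ν) : ℝ) * (Nat.doubleFactorial (2 * ν - 1) : ℝ) *
          a (m + 1 - 2 * ν + 1) +
    (m + 1) * ∑ ν ∈ Finset.range (m / 2 + 1),
        (m.choose (2 * ν) : ℝ) * (Nat.doubleFactorial (2 * ν - 1) : ℝ) * a (m - 2 * ν) := by
  have h1 : ∑ ν ∈ Finset.range ((m + 1) / 2 + 1),
        ((m + 1).choose (2 * ν) : ℝ) * (Nat.doubleFactorial (2 * ν - 1) : ℝ) *
          a (m + 1 - 2 * ν + 1) = ∑ ν ∈ Finset.range (m / 2 + 1 + 1),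
        ((m + 1).choose (2 * ν) : ℝ) * (Nat.doubleFactorial (2 * ν - 1) : ℝ) *
          a (m + 2 - 2 * ν) := by
    rw [← Finset.sum_subset (s₁ := Finset.range ((m + 1) / 2 + 1))
      (s₂ := Finset.range (m / 2 + 1 + 1))]
    · refine Finset.sum_congr rfl fun ν hν => ?_
      rw [Finset.mem_range] at hν
      rw [show m + 1 - 2 * ν + 1 = m + 2 - 2 * ν by omega]
    · intro ν hν
      rw [Finset.mem_range] at *
      omega
    · intro ν _ hν
      rw [Finset.mem_range] at hν
      rw [Nat.choose_eq_zero_of_lt (by omega)]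
      simp
  rw [h1, show (m + 2) / 2 + 1 = m / 2 + 1 + 1 by omega, Finset.sum_range_succ',
    Finset.sum_range_succ' _ (m / 2 + 1), Finset.mul_sum, add_right_comm, ← Finset.sum_add_distrib]
  congr 1
  · refine Finset.sum_congr rfl fun ν _ => ?_
    rw [aux_coef, show m + 2 - 2 * (ν + 1) = m - 2 * ν by omega]
    ring

/-- Power version of Stein's Lemma: for an `m`-times continuously differentiable `f`
with all iterated derivatives up to order `m` square-integrable against the standard
Gaussian measure `γ`,
`∫ f(x) xᵐ dγ = ∑_{ν=0}^{⌊m/2⌋} C(m, 2ν) (2ν−1)!! ∫ f^{(m−2ν)} dγ`. -/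
theorem stein_lemma_power_version (m : ℕ) (f : ℝ → ℝ)
    (hf : ContDiff ℝ (m : ℕ∞) f)
    (hint : ∀ l ≤ m, MemLp (iteratedDeriv l f) 2 (gaussianReal 0 1)) :
    ∫ x, f x * x ^ m ∂(gaussianReal 0 1) =
      ∑ ν ∈ Finset.range (m / 2 + 1),
        (m.choose (2 * ν) : ℝ) * (Nat.doubleFactorial (2 * ν - 1) : ℝ) *
          ∫ x, iteratedDeriv (m - 2 * ν) f x ∂(gaussianReal 0 1) := by
  induction m using Nat.strong_induction_on generalizing f with
  | _ m ih =>
  match m, ih, hf, hint with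
  | 0, _, _, _ => simp
  | 1, _, hf, hint =>
    have h0 := hint 0 (by omega)
    have h1 := hint 1 le_rfl
    rw [iteratedDeriv_zero] at h0
    rw [iteratedDeriv_one] at h1
    have := aux_step f (hf.differentiable (by simp)) h0 h1 0
    simpa [iteratedDeriv_one] using this
  | m + 2, ih, hf, hint =>
    have h0 := hint 0 (by omega)
    have h1 := hint 1 (by omega)
    rw [iteratedDeriv_zero] at h0
    rw [iteratedDeriv_one] at h1
    rw [aux_step f (hf.differentiable (by simp)) h0 h1 (m + 1)]
    have hf' : ContDiff ℝ ((m + 1 : ℕ) : ℕ∞) (deriv f) := by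
      have : ContDiff ℝ (((m + 1 : ℕ) : WithTop ℕ∞) + 1) f := by exact_mod_cast hf
      exact_mod_cast (contDiff_succ_iff_deriv.1 this).2.2
    have e1 := ih (m + 1) (by omega) (deriv f) hf'
      (fun l hl => by rw [← iteratedDeriv_succ']; exact hint _ (by omega))
    have e2 := ih m (by omega) f (hf.of_le (by norm_cast; omega)) (fun l hl => hint l (by omega))
    simp only [← iteratedDeriv_succ'] at e1
    rw [aux_sum m (fun l => ∫ x, iteratedDeriv l f x ∂(gaussianReal 0 1)), e1, ← e2]
    simp
end

section
/- Determinant formula in terms of ordinary partial Bell polynomials: let m ≥ 1, 1 ≤ r ≤ m, and x_1, …, x_r ∈ ℂ. Let y be the interleaved sequence of length 2r given by y_{2i−1} = 0 and y_{2i} = x_i for 1 ≤ i ≤ r. Then det( B_{2m+1}[2r](y_1, …, y_{2r}) ) = (2r)! · ∑_{l=1}^{r} (−1)^l · binom(2m + l, l) · B°_{r,l}(x_1, …, x_{r−l+1}). -/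
open scoped BigOperators

/-- Ordinary partial Bell polynomials `B°_{q,l}(x₁, x₂, …)` (indices of `x` start
at 1): `B°_{q,0} = 1` if `q = 0` and `0` otherwise, and
`B°_{q,l}(x) = ∑_{i=1}^{q−l+1} xᵢ B°_{q−i,l−1}(x)` for `l ≥ 1`. -/
noncomputable def bellOrd (x : ℕ → ℂ) : ℕ → ℕ → ℂ
  | q, 0 => if q = 0 then 1 else 0
  | q, l + 1 => ∑ i ∈ Finset.Icc 1 (q - l), x i * bellOrd x (q - i) l

/-- The `p × p` matrix `B_N[p](y₁, …, y_p)` with (1-based) entries `0` if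
`j ≥ i + 2`, `i` if `j = i + 1`, and `((i − j + 1)N + j − 1)·y_{i−j+1}` if
`j ≤ i`. -/
def BMat (N p : ℕ) (y : ℕ → ℂ) : Matrix (Fin p) (Fin p) ℂ :=
  Matrix.of fun i j =>
    if (i : ℕ) + 2 ≤ (j : ℕ) then 0
    else if (j : ℕ) = (i : ℕ) + 1 then (((i : ℕ) + 1 : ℕ) : ℂ)
    else ((((i : ℕ) - (j : ℕ) + 1) * N + (j : ℕ) : ℕ) : ℂ) *
      y ((i : ℕ) - (j : ℕ) + 1)


open scoped Matrix in
theorem det_hess (N P : ℕ) (y e : ℕ → ℂ) (h0 : e 0 = 1)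
    (h : ∀ n, 1 ≤ n → n ≤ P + 1 → (n : ℂ) * e n =
      - ∑ j ∈ Finset.range n, (((n - j) * N + j : ℕ) : ℂ) * y (n - j) * e j) :
    (BMat N (P + 1) y).det = (-1) ^ (P + 1) * ((P + 1).factorial : ℂ) * e (P + 1) := by
  have hmul : BMat N (P + 1) y *ᵥ (fun j : Fin (P + 1) => e j) =
      fun i : Fin (P + 1) => if (i : ℕ) = P then -((P + 1 : ℕ) : ℂ) * e (P + 1) else 0 := by
    funext i
    have hi := i.2
    have hh := h (i + 1) (by omega) (by omega)
    set G : ℕ → ℂ := fun j => (if (i : ℕ) + 2 ≤ j then 0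
      else if j = (i : ℕ) + 1 then (((i : ℕ) + 1 : ℕ) : ℂ)
      else ((((i : ℕ) - j + 1) * N + j : ℕ) : ℂ) * y ((i : ℕ) - j + 1)) * e j with hG
    have e1 : (BMat N (P + 1) y *ᵥ (fun j : Fin (P + 1) => e j)) i
        = ∑ j ∈ Finset.range (P + 1), G j := by
      rw [← Fin.sum_univ_eq_sum_range]
      rfl
    have e2 : ∑ j ∈ Finset.range ((i : ℕ) + 1), G j =
        - ((((i : ℕ) + 1 : ℕ) : ℂ) * e (i + 1)) := by
      rw [hh, neg_neg]
      apply Finset.sum_congr rfl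
      intro j hj
      have hj := Finset.mem_range.1 hj
      have : (i : ℕ) + 1 - j = i - j + 1 := by omega
      simp only [hG]
      rw [if_neg (by omega), if_neg (by omega), this]
    rw [e1]
    by_cases hP : (i : ℕ) = P
    · rw [if_pos hP]
      rw [hP] at e2
      rw [e2, neg_mul]
    · rw [if_neg hP]
      have hsub : Finset.range ((i : ℕ) + 2) ⊆ Finset.range (P + 1) := by
        intro a; simp only [Finset.mem_range]; omega
      rw [← Finset.sum_subset hsub, Finset.sum_range_succ, e2]
      · simp [hG]
      · intro a _ ha
        have ha : ¬ a < (i : ℕ) + 2 := by simpa using ha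
        simp only [hG]
        rw [if_pos (by omega), zero_mul]
  have hc : (BMat N (P + 1) y).cramer (BMat N (P + 1) y *ᵥ (fun j : Fin (P + 1) => e j)) 0
      = (BMat N (P + 1) y).det := by
    rw [Matrix.cramer_eq_adjugate_mulVec, Matrix.mulVec_mulVec, Matrix.adjugate_mul,
      Matrix.smul_mulVec, Matrix.one_mulVec]
    simp [h0]
  rw [← hc, Matrix.cramer_apply, hmul, Matrix.det_succ_column_zero,
    Finset.sum_eq_single (Fin.last P)]
  · have hs : (((BMat N (P + 1) y).updateCol 0 (fun i : Fin (P + 1) =>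
        if (i : ℕ) = P then -((P + 1 : ℕ) : ℂ) * e (P + 1) else 0)).submatrix
          (Fin.last P).succAbove Fin.succ) =
        Matrix.of fun i j : Fin P => BMat N (P + 1) y i.castSucc j.succ := by
      ext i j
      simp [Matrix.updateCol_apply, Fin.succ_ne_zero]
    have hd : (Matrix.of fun i j : Fin P => BMat N (P + 1) y i.castSucc j.succ).det
        = (P.factorial : ℂ) := by
      rw [Matrix.det_of_lowerTriangular]
      · rw [← Finset.prod_range_add_one_eq_factorial, ← Fin.prod_univ_eq_prod_range
          (fun i => i + 1), Nat.cast_prod]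
        apply Finset.prod_congr rfl
        intro i _
        simp [BMat]
      · intro i j hij
        have hij : (i : ℕ) < j := hij
        simp only [BMat, Matrix.of_apply, Fin.val_castSucc, Fin.val_succ]
        rw [if_pos (by omega)]
    rw [hs, hd, Matrix.updateCol_self, Nat.factorial_succ]
    simp only [Fin.val_last, if_true]
    push_cast
    ring
  · intro i _ hi
    have : (i : ℕ) ≠ P := fun h => hi (Fin.ext h)
    rw [Matrix.updateCol_self, if_neg this]
    simp
  · simp

theorem bell_coeff (x : ℕ → ℂ) (l : ℕ) : ∀ q, bellOrd x q l =
    PowerSeries.coeff q ((PowerSeries.mk fun k => if k = 0 then 0 else x k) ^ l) := by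
  induction l with
  | zero => intro q; simp [bellOrd, PowerSeries.coeff_one]
  | succ l ih =>
    intro q
    rw [bellOrd, pow_succ', PowerSeries.coeff_mul, Finset.Nat.sum_antidiagonal_eq_sum_range_succ_mk]
    have hsub : Finset.Icc 1 (q - l) ⊆ Finset.range q.succ := by
      intro a; simp only [Finset.mem_range, Finset.mem_Icc]; omega
    rw [← Finset.sum_subset hsub]
    · apply Finset.sum_congr rfl
      intro i hi
      have := Finset.mem_Icc.1 hi
      rw [ih, PowerSeries.coeff_mk, if_neg (by omega)]
    · intro i hi hi2
      simp only [Finset.mem_range, Finset.mem_Icc] at hi hi2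
      by_cases h : i = 0
      · simp [h]
      · have : PowerSeries.coeff (q - i)
            ((PowerSeries.mk fun k => if k = 0 then (0:ℂ) else x k) ^ l) = 0 := by
          apply PowerSeries.coeff_of_lt_order
          refine lt_of_lt_of_le ?_ (PowerSeries.le_order_pow_of_constantCoeff_eq_zero l (by simp))
          exact_mod_cast (by omega : q - i < l)
        simp only [this, mul_zero]

theorem bell_zero (x : ℕ → ℂ) (q l : ℕ) (h : q < l) : bellOrd x q l = 0 := by
  cases l with
  | zero => omega
  | succ l =>
    rw [bellOrd, Finset.Icc_eq_empty (by omega), Finset.sum_empty]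

theorem bell_conv (x : ℕ → ℂ) (q l : ℕ) :
    ∑ j ∈ Finset.range q, x (q - j) * bellOrd x j l = bellOrd x q (l + 1) := by
  rw [bell_coeff, pow_succ, PowerSeries.coeff_mul,
    Finset.Nat.sum_antidiagonal_eq_sum_range_succ_mk, Finset.sum_range_succ]
  simp only [PowerSeries.coeff_mk, tsub_self, if_true, mul_zero, add_zero]
  apply Finset.sum_congr rfl
  intro j hj
  have := Finset.mem_range.1 hj
  rw [if_neg (by omega), bell_coeff, mul_comm]

theorem bell_deriv (x : ℕ → ℂ) (q l : ℕ) :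
    ((l : ℂ) + 1) * ∑ j ∈ Finset.range q, ((q - j : ℕ) : ℂ) * x (q - j) * bellOrd x j l
      = (q : ℂ) * bellOrd x q (l + 1) := by
  cases q with
  | zero => simp
  | succ q =>
    have h := PowerSeries.coeff_derivative (R := ℂ)
      ((PowerSeries.mk fun k => if k = 0 then 0 else x k) ^ (l + 1)) q
    rw [← bell_coeff, Derivation.leibniz_pow] at h
    rw [mul_comm, Nat.cast_succ, mul_comm, mul_comm _ (bellOrd _ _ _), ← h]
    simp only [Nat.add_sub_cancel, smul_eq_mul, nsmul_eq_mul]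
    rw [← map_natCast (PowerSeries.C (R := ℂ)), PowerSeries.coeff_C_mul, PowerSeries.coeff_mul,
      Finset.Nat.sum_antidiagonal_eq_sum_range_succ_mk]
    push_cast
    congr 1
    apply Finset.sum_congr rfl
    intro j hj
    have hj := Finset.mem_range.1 hj
    have : q + 1 - j = q - j + 1 := by omega
    rw [PowerSeries.coeff_derivative, PowerSeries.coeff_mk, if_neg (by omega), bell_coeff, this]
    push_cast
    ring

noncomputable def fS (x : ℕ → ℂ) (M L q : ℕ) : ℂ :=
  ∑ l ∈ Finset.range (L + 1), (-1 : ℂ) ^ l * ((M + l).choose l : ℂ) * bellOrd x q l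

theorem fS_rec (x : ℕ → ℂ) (M L q : ℕ) (hq : 1 ≤ q) (hL : q ≤ L) :
    (q : ℂ) * fS x M L q = - ∑ j ∈ Finset.range q,
      (((q - j) * (M + 1) + j : ℕ) : ℂ) * x (q - j) * fS x M L j := by
  have h1 : ∀ l, ∑ j ∈ Finset.range q, (((q - j) * (M + 1) + j : ℕ) : ℂ) * x (q - j) *
      ((-1 : ℂ) ^ l * ((M + l).choose l : ℂ) * bellOrd x j l) =
      - ((q : ℂ) * ((-1 : ℂ) ^ (l + 1) * ((M + (l + 1)).choose (l + 1) : ℂ)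
        * bellOrd x q (l + 1))) := by
    intro l
    have hl : ((l : ℂ) + 1) ≠ 0 := Nat.cast_add_one_ne_zero l
    have e1 : ∑ j ∈ Finset.range q, (((q - j) * (M + 1) + j : ℕ) : ℂ) * x (q - j) *
      ((-1 : ℂ) ^ l * ((M + l).choose l : ℂ) * bellOrd x j l) =
      (-1 : ℂ) ^ l * ((M + l).choose l : ℂ) *
      (M * ∑ j ∈ Finset.range q, ((q - j : ℕ) : ℂ) * x (q - j) * bellOrd x j l +
      q * ∑ j ∈ Finset.range q, x (q - j) * bellOrd x j l) := by
      rw [Finset.mul_sum, Finset.mul_sum, ← Finset.sum_add_distrib, Finset.mul_sum]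
      apply Finset.sum_congr rfl
      intro j hj
      have hj := Finset.mem_range.1 hj
      push_cast [Nat.cast_sub hj.le]
      ring
    have e2 := Nat.add_one_mul_choose_eq (M + l) l
    have e2' : ((M : ℂ) + l + 1) * ((M + l).choose l : ℂ) =
      ((M + (l + 1)).choose (l + 1) : ℂ) * (l + 1) := by exact_mod_cast e2
    rw [e1, bell_conv]
    apply mul_left_cancel₀ hl
    have e3 := bell_deriv x q l
    linear_combination ((-1 : ℂ) ^ l * ((M + l).choose l : ℂ) * M) * e3 +
      (-1) ^ l * q * bellOrd x q (l + 1) * e2'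
  simp only [fS, Finset.mul_sum]
  rw [Finset.sum_comm, Finset.sum_congr rfl (fun l _ => h1 l), Finset.sum_neg_distrib, neg_neg,
    Finset.sum_range_succ', Finset.sum_range_succ _ L, bell_zero x q (L + 1) (by omega)]
  have : bellOrd x q 0 = 0 := by rw [bellOrd, if_neg (by omega)]
  simp [this]

theorem sum_even (g : ℕ → ℂ) (hg : ∀ j, j % 2 = 1 → g j = 0) (q : ℕ) :
    ∑ j ∈ Finset.range (2 * q), g j = ∑ j ∈ Finset.range q, g (2 * j) := by
  induction q with
  | zero => simp
  | succ q ih =>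
    rw [Nat.mul_succ, Finset.sum_range_succ, Finset.sum_range_succ, ih, Finset.sum_range_succ,
      hg (2 * q + 1) (by omega), add_zero]

/-- Determinant formula in terms of ordinary partial Bell polynomials: with `y` the
interleaving `(0, x₁, 0, x₂, …, 0, x_r)`,
`det B_{2m+1}[2r](y) = (2r)! ∑_{l=1}^r (−1)ˡ C(2m+l, l) B°_{r,l}(x₁, …)`. -/
theorem det_BMat_eq_bell_sum (m r : ℕ) (hm : 1 ≤ m) (hr1 : 1 ≤ r) (hrm : r ≤ m)
    (x : ℕ → ℂ) :
    (BMat (2 * m + 1) (2 * r) (fun l => if l % 2 = 0 then x (l / 2) else 0)).det =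
      ((2 * r).factorial : ℂ) *
        ∑ l ∈ Finset.Icc 1 r,
          (-1 : ℂ) ^ l * ((2 * m + l).choose l : ℂ) * bellOrd x r l := by
  obtain ⟨P, hP⟩ : ∃ P, 2 * r = P + 1 := ⟨2 * r - 1, by omega⟩
  have key := det_hess (2 * m + 1) P (fun l => if l % 2 = 0 then x (l / 2) else 0)
    (fun j => if j % 2 = 0 then fS x (2 * m) r (j / 2) else 0) (by
      simp only [Nat.zero_mod, if_true, Nat.zero_div, fS]
      rw [Finset.sum_range_succ', Finset.sum_eq_zero]
      · simp [bellOrd]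
      · intro l _
        rw [bell_zero x 0 (l + 1) (by omega), mul_zero]) (by
      intro n hn1 hn2
      rcases Nat.even_or_odd' n with ⟨q, rfl | rfl⟩
      · rw [sum_even]
        · have := fS_rec x (2 * m) r q (by omega) (by omega)
          have hd : 2 * q / 2 = q := by omega
          rw [if_pos (by omega), hd]
          push_cast
          rw [mul_assoc, this, mul_neg, Finset.mul_sum]
          congr 1
          apply Finset.sum_congr rfl
          intro j hj
          have hj := Finset.mem_range.1 hj
          have h1 : (2 * q - 2 * j) / 2 = q - j := by omega
          have h2 : 2 * j / 2 = j := by omega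
          have h3 : 2 * q - 2 * j = 2 * (q - j) := by omega
          rw [if_pos (by omega), if_pos (by omega), h1, h2, h3]
          push_cast
          ring
        · intro j hj
          rw [if_neg (c := j % 2 = 0) (by omega), mul_zero]
      · rw [if_neg (by omega), Finset.sum_eq_zero]
        · simp
        · intro j hj
          have hj := Finset.mem_range.1 hj
          by_cases h : j % 2 = 0
          · rw [if_neg (c := (2 * q + 1 - j) % 2 = 0) (by omega)]; simp
          · rw [if_neg h, mul_zero])
  rw [← hP] at key
  rw [key, Even.neg_one_pow (by simp), one_mul, if_pos (by omega)]
  congr 1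
  have hd : 2 * r / 2 = r := by omega
  rw [hd, fS, Finset.sum_range_succ']
  have h0 : bellOrd x r 0 = 0 := by rw [bellOrd, if_neg (by omega)]
  rw [h0, mul_zero, add_zero, Finset.range_eq_Ico,
    Finset.sum_Ico_add' (fun l => (-1 : ℂ) ^ l * ((2 * m + l).choose l : ℂ) * bellOrd x r l) 0 r 1]
  rfl
end
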